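/- arXiv:2011.03033 — 2 statements merged into one kernel-verified Lean document; each statement's English description precedes it below -/
import Mathlib

section
/- Let D be a symmetric cycle in the hypercube graph H(t,2) and let T be a vertex of {1,-1}^t that does not lie on the cycle, i.e. T is not a member of V(D). Writing Q(T,D) = {Q^0, Q^1, ..., Q^{q(T)-1}}, one has sum over unordered pairs 0 <= i < j <= q(T)-1 of d(Q^i,Q^j) = ( 1 - (1/t)|T^-| + (1/t) sum_{Q in Q(T,D)} |Q^-| ) * ( -|T^-| + sum_{Q in Q(T,D)} |Q^-| ). -/
open Finset

noncomputable section

/-- Row vectors of `ℝ^t`. -/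
abbrev Vec (t : ℕ) := Fin t → ℝ

/-- `T` is a vertex of the discrete hypercube `{1,-1}^t`. -/
def IsPMVertex {t : ℕ} (T : Vec t) : Prop := ∀ i, T i = 1 ∨ T i = -1

/-- `T` is a vertex of the discrete hypercube `{0,1}^t`. -/
def Is01Vertex {t : ℕ} (T : Vec t) : Prop := ∀ i, T i = 0 ∨ T i = 1

open Classical in
/-- Hamming distance between two vectors. -/
def hamming {t : ℕ} (X Y : Vec t) : ℕ :=
  (Finset.univ.filter fun i => X i ≠ Y i).card

/-- The standard scalar product on `ℝ^t`. -/
def sprod {t : ℕ} (X Y : Vec t) : ℝ := ∑ i, X i * Y i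

open Classical in
/-- The cardinality of the negative part `T⁻ = {e : T e = -1}` of `T`. -/
def negCard {t : ℕ} (T : Vec t) : ℕ :=
  (Finset.univ.filter fun i => T i = -1).card

open Classical in
/-- The Hamming weight (number of coordinates equal to `1`) of a `0/1`-vector. -/
def hwt01 {t : ℕ} (T : Vec t) : ℕ :=
  (Finset.univ.filter fun i => T i = 1).card

/-- `D` (read as a `2t`-periodic sequence `D^0, D^1, …`) is a symmetric cycle in the
hypercube graph `H(t,2)` on the vertex set `{1,-1}^t`: all `D^k` are vertices,
consecutive members are adjacent (Hamming distance `1`), the `2t` members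
`D^0, …, D^{2t-1}` are pairwise distinct, and `D^{k+t} = -D^k` for `0 ≤ k ≤ t-1`. -/
structure IsSymCycle (t : ℕ) (D : ℕ → Vec t) : Prop where
  vertex : ∀ k, IsPMVertex (D k)
  periodic : ∀ k, D (k + 2 * t) = D k
  adj : ∀ k, hamming (D k) (D (k + 1)) = 1
  inj : ∀ k l, k < 2 * t → l < 2 * t → D k = D l → k = l
  symm : ∀ k, k ≤ t - 1 → D (k + t) = -(D k)

/-- `D` is a symmetric cycle in the hypercube graph on the vertex set `{0,1}^t`:
here `D^{k+t} = (1,…,1) - D^k` for `0 ≤ k ≤ t-1`. -/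
structure IsSymCycle01 (t : ℕ) (D : ℕ → Vec t) : Prop where
  vertex : ∀ k, Is01Vertex (D k)
  periodic : ∀ k, D (k + 2 * t) = D k
  adj : ∀ k, hamming (D k) (D (k + 1)) = 1
  inj : ∀ k l, k < 2 * t → l < 2 * t → D k = D l → k = l
  symm : ∀ k, k ≤ t - 1 → D (k + t) = (fun _ => 1) - D k

open Classical in
/-- The vertex sequence `V(D) = (D^0, …, D^{2t-1})` of a cycle, as a finset. -/
def VD (t : ℕ) (D : ℕ → Vec t) : Finset (Vec t) :=
  (Finset.range (2 * t)).image D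

/-- `Q` is an inclusion-minimal subset of `V(D)` whose members sum to `T` (in `ℝ^t`). -/
def IsMinDecomp (t : ℕ) (D : ℕ → Vec t) (T : Vec t) (Q : Finset (Vec t)) : Prop :=
  Q ⊆ VD t D ∧ (∑ q ∈ Q, q) = T ∧
    ∀ Q' : Finset (Vec t), Q' ⊆ VD t D → (∑ q ∈ Q', q) = T → ¬Q' ⊂ Q

/-- The vertex `T_S ∈ {1,-1}^t` whose negative part is `S`. -/
def topeOf (t : ℕ) (S : Finset (Fin t)) : Vec t := fun i => if i ∈ S then -1 else 1

/-- `x` is a coordinate vector of `T` w.r.t. `(D^0, …, D^{t-1})` with all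
components in `{-1,0,1}`; by uniqueness this is the vector `x(T,D)`. -/
def IsXVec (t : ℕ) (D : ℕ → Vec t) (T : Vec t) (x : Fin t → ℝ) : Prop :=
  (∀ i, x i = -1 ∨ x i = 0 ∨ x i = 1) ∧ T = ∑ i : Fin t, x i • D (i : ℕ)

open Classical in
/-- The `{0,1}`-decomposition equation
`T = -(|Q|-1)/2 • (1,…,1) + ∑_{q ∈ Q, q ≠ 0} q`. -/
def Decomp01 (t : ℕ) (T : Vec t) (Q : Finset (Vec t)) : Prop :=
  T = (-(((Q.card : ℝ) - 1) / 2)) • (fun _ => 1 : Vec t) +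
    ∑ q ∈ Q.filter (fun q => q ≠ (0 : Vec t)), q

/-- `R^k` for `0 ≤ k ≤ t-1`: the all-ones vector with the first `k` coordinates negated. -/
def Rvec (t : ℕ) (k : ℕ) : Vec t := fun i => if (i : ℕ) < k then -1 else 1

/-- The distinguished symmetric cycle `R` in `H(t,2)`:
`R^0 = (1,…,1)`, `R^s = {}_{-[s]}R^0` for `1 ≤ s ≤ t-1`, and `R^{k+t} = -R^k`. -/
def Rcyc (t : ℕ) (k : ℕ) : Vec t :=
  if k % (2 * t) < t then Rvec t (k % (2 * t)) else -(Rvec t (k % (2 * t) - t))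

/-- `q(A) = ℓ`: an (automatically, the unique) inclusion-minimal subset of `V(R)`
summing to `T_A` has cardinality `ℓ`. -/
def qIs (t : ℕ) (A : Finset (Fin t)) (ℓ : ℕ) : Prop :=
  ∃ Q : Finset (Vec t), IsMinDecomp t (Rcyc t) (topeOf t A) Q ∧ Q.card = ℓ

/-- `c(m;n) = binom(n-1, m-1)`, the number of compositions of `n` into `m` positive
parts (zero whenever `m = 0` or `n ≤ 0`). -/
def comp (m : ℕ) (n : ℤ) : ℕ :=
  if 1 ≤ m ∧ 1 ≤ n then ((n - 1).toNat).choose (m - 1) else 0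

/-- The number of ternary Smirnov words (words with no two equal adjacent letters)
over the alphabet `(θ, α, β) = (0, 1, 2)` with Parikh vector `(k, i, j)`
(that is, `k` letters `θ`, `i` letters `α`, `j` letters `β`), starting with the
letter `s'` and ending with the letter `s''`. -/
def Tm (s' s'' : Fin 3) (k i j : ℕ) : ℕ :=
  Set.ncard { w : List (Fin 3) | List.Chain' (· ≠ ·) w ∧
    w.count 0 = k ∧ w.count 1 = i ∧ w.count 2 = j ∧
    w.head? = some s' ∧ w.getLast? = some s'' }

/-- The number of Smirnov words over the alphabet `(θ, α, β, γ) = (0, 1, 2, 3)` with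
Parikh vector `(k, i, j, h)`, starting with `s'` and ending with `s''`. -/
def Fr (s' s'' : Fin 4) (k i j h : ℕ) : ℕ :=
  Set.ncard { w : List (Fin 4) | List.Chain' (· ≠ ·) w ∧
    w.count 0 = k ∧ w.count 1 = i ∧ w.count 2 = j ∧ w.count 3 = h ∧
    w.head? = some s' ∧ w.getLast? = some s'' }

theorem hamming_eq_sum {t : ℕ} {X Y : Vec t} (hX : IsPMVertex X) (hY : IsPMVertex Y) :
    (hamming X Y : ℝ) = ∑ i, (1 - X i * Y i) / 2 := by
  classical
  unfold hamming
  rw [Finset.card_filter, Nat.cast_sum]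
  refine Finset.sum_congr rfl fun i _ => ?_
  rcases hX i with h | h <;> rcases hY i with h' | h' <;> rw [h, h'] <;> norm_num

theorem negCard_eq_sum {t : ℕ} {X : Vec t} (hX : IsPMVertex X) :
    (negCard X : ℝ) = ∑ i, (1 - X i) / 2 := by
  classical
  unfold negCard
  rw [Finset.card_filter, Nat.cast_sum]
  refine Finset.sum_congr rfl fun i _ => ?_
  rcases hX i with h | h <;> rw [h] <;> norm_num

open Classical in
/-- for `T ∉ V(D)`,
`∑_{i<j} d(Q^i,Q^j) = (1 - |T⁻|/t + (∑_Q |Q⁻|)/t) ⬝ (-|T⁻| + ∑_Q |Q⁻|)`;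
the sum over unordered pairs of distinct members of `Q(T,D)` is half the sum over
the off-diagonal pairs. -/
theorem stmt6 (t : ℕ) (ht : 3 ≤ t) (D : ℕ → Vec t) (hD : IsSymCycle t D)
    (T : Vec t) (hT : IsPMVertex T) (hTD : T ∉ VD t D)
    (Q : Finset (Vec t)) (hQ : IsMinDecomp t D T Q) :
    (∑ p ∈ Q.offDiag, (hamming p.1 p.2 : ℝ)) / 2 =
      (1 - (1 / (t : ℝ)) * (negCard T : ℝ) +
          (1 / (t : ℝ)) * ∑ q ∈ Q, (negCard q : ℝ)) *
        (-(negCard T : ℝ) + ∑ q ∈ Q, (negCard q : ℝ)) := by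
  have hv : ∀ q ∈ Q, IsPMVertex q := by
    intro q hq
    have h := hQ.1 hq
    unfold VD at h
    rw [Finset.mem_image] at h
    obtain ⟨k, _, rfl⟩ := h
    exact hD.vertex k
  have hs : ∀ i, ∑ q ∈ Q, q i = T i := by
    intro i
    rw [← hQ.2.1, Finset.sum_apply]
  have ht0 : (t : ℝ) ≠ 0 := by
    have : t ≠ 0 := by omega
    exact_mod_cast this
  have hN : ∑ q ∈ Q, (negCard q : ℝ) = ((t : ℝ) * Q.card - ∑ i, T i) / 2 := by
    rw [Finset.sum_congr rfl fun q hq => negCard_eq_sum (hv q hq), Finset.sum_comm]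
    simp only [← Finset.sum_div, Finset.sum_sub_distrib, hs]
    simp
  have hNT : (negCard T : ℝ) = ((t : ℝ) - ∑ i, T i) / 2 := by
    rw [negCard_eq_sum hT]
    simp only [← Finset.sum_div, Finset.sum_sub_distrib]
    simp
  have hH : ∑ p ∈ Q.offDiag, (hamming p.1 p.2 : ℝ) = (t : ℝ) * ((Q.card : ℝ) ^ 2 - 1) / 2 := by
    have h1 : ∑ p ∈ Q.offDiag, (hamming p.1 p.2 : ℝ) =
        ∑ p ∈ Q ×ˢ Q, (hamming p.1 p.2 : ℝ) := by
      refine Finset.sum_subset (fun p hp => ?_) (fun p hp hp' => ?_)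
      · rw [Finset.mem_offDiag] at hp
        exact Finset.mem_product.2 ⟨hp.1, hp.2.1⟩
      · rw [Finset.mem_product] at hp
        have : p.1 = p.2 := by
          by_contra hne
          exact hp' (Finset.mem_offDiag.2 ⟨hp.1, hp.2, hne⟩)
        simp [hamming, this]
    rw [h1, Finset.sum_congr rfl fun p hp => hamming_eq_sum
      (hv p.1 (Finset.mem_product.1 hp).1) (hv p.2 (Finset.mem_product.1 hp).2),
      Finset.sum_comm]
    have h2 : ∀ i : Fin t, ∑ p ∈ Q ×ˢ Q, (1 - p.1 i * p.2 i) / 2 =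
        ((Q.card : ℝ) ^ 2 - 1) / 2 := by
      intro i
      rw [← Finset.sum_div, Finset.sum_sub_distrib,
        Finset.sum_product (f := fun p : Vec t × Vec t => p.1 i * p.2 i),
        ← Finset.sum_mul_sum, hs]
      have : T i * T i = 1 := by rcases hT i with h | h <;> rw [h] <;> norm_num
      rw [this]
      simp [pow_two]
    rw [Finset.sum_congr rfl fun i _ => h2 i]
    simp
    ring
  rw [hH, hN, hNT]
  field_simp
  ring
end
end

section
/- Let Dtilde be a symmetric cycle in the hypercube graph Htilde(t,2) on the vertex set {0,1}^t, i.e. a 2t-cycle whose vertex sequence (Dtilde^0,...,Dtilde^{2t-1}) satisfies Dtilde^{k+t} = (1,...,1) - Dtilde^k for 0 <= k <= t-1. Then for every vertex Ttilde in {0,1}^t there exists a unique inclusion-minimal subset Qtilde of the vertex sequence of Dtilde, of odd cardinality, such that Ttilde = -(1/2)(|Qtilde| - 1)*(1,...,1) + sum of all members Q of Qtilde with Q not equal to the zero vector. -/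
open Finset

noncomputable section

/-- The triangular-type linear system solved explicitly. -/
theorem aux_sys (t : ℕ) (ht : 1 ≤ t) (y g : ℕ → ℝ) :
    (∀ j < t, ∑ k ∈ Finset.range t, y k * (if k ≤ j then 1 else -1) = g j) ↔
      ∀ j < t, y j = (g j - (if j = 0 then -g (t-1) else g (j-1))) / 2 := by
  have key : ∀ j < t, ∑ k ∈ Finset.range t, y k * (if k ≤ j then (1:ℝ) else -1)
      = 2 * (∑ k ∈ Finset.range (j+1), y k) - ∑ k ∈ Finset.range t, y k := by
    intro j hj
    have h1 : ∀ k, y k * (if k ≤ j then (1:ℝ) else -1) = 2 * (if k ≤ j then y k else 0) - y k := by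
      intro k; split_ifs <;> ring
    simp_rw [h1]
    rw [Finset.sum_sub_distrib, ← Finset.mul_sum, ← Finset.sum_filter]
    congr 3
    ext k
    simp only [Finset.mem_filter, Finset.mem_range]
    omega
  constructor
  · intro h j hj
    have hl := h (t-1) (by omega)
    rw [key _ (by omega), Nat.sub_add_cancel ht] at hl
    have h2 := h j hj
    rw [key j hj, Finset.sum_range_succ] at h2
    split_ifs with h0
    · subst h0
      simp at h2
      linarith
    · have h3 := h (j-1) (by omega)
      rw [key _ (by omega), Nat.sub_add_cancel (by omega)] at h3
      linarith
  · intro h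
    have pre : ∀ j < t, ∑ k ∈ Finset.range (j+1), y k = (g j + g (t-1)) / 2 := by
      intro j
      induction j with
      | zero => intro h0; have := h 0 h0; simp at this ⊢; linarith
      | succ n ih =>
        intro hn
        rw [Finset.sum_range_succ, ih (by omega), h _ hn]
        simp
        ring
    intro j hj
    have hl := pre (t-1) (by omega)
    rw [Nat.sub_add_cancel ht] at hl
    rw [key j hj, pre j hj, hl]
    ring

/-- Coordinates flipped along the first half of the cycle. -/
theorem aux_flip (t : ℕ) (ht : 3 ≤ t) (D : ℕ → Vec t) (hD : IsSymCycle01 t D) :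
    ∃ e : ℕ → Fin t, (∀ i, ∃ j < t, e j = i) ∧
      ∀ k j, k < t → j < t →
        D k (e j) = if k ≤ j then D 0 (e j) else 1 - D 0 (e j) := by
  have h1 : ∀ k, ∃ i, D k i ≠ D (k+1) i ∧ ∀ i', i' ≠ i → D k i' = D (k+1) i' := by
    intro k
    have := hD.adj k
    unfold hamming at this
    obtain ⟨i, hi⟩ := Finset.card_eq_one.mp this
    refine ⟨i, ?_, ?_⟩
    · have : i ∈ ({i} : Finset (Fin t)) := by simp
      rw [← hi] at this
      simpa using this
    · intro i' hne
      by_contra hc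
      have : i' ∈ ({i} : Finset (Fin t)) := by rw [← hi]; simpa using hc
      exact hne (by simpa using this)
  choose e he1 he2 using h1
  have hsurj : ∀ i, ∃ j < t, e j = i := by
    intro i
    by_contra! hc
    have hk : ∀ k, k ≤ t → D k i = D 0 i := by
      intro k
      induction k with
      | zero => intro _; rfl
      | succ n ih =>
        intro hn
        rw [← he2 n i (fun h => hc n (by omega) h.symm), ih (by omega)]
    have h2 := congrFun (hD.symm 0 (by omega)) i
    rw [zero_add, hk t le_rfl] at h2
    simp only [Pi.sub_apply] at h2
    rcases hD.vertex 0 i with h | h <;> rw [h] at h2 <;> norm_num at h2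
  have hinj : ∀ a b, a < t → b < t → e a = e b → a = b := by
    have hs : Function.Surjective (fun a : Fin t => e a) := by
      intro i
      obtain ⟨j, hj, h⟩ := hsurj i
      exact ⟨⟨j, hj⟩, h⟩
    have hi := Finite.injective_iff_surjective.mpr hs
    intro a b ha hb hab
    have := @hi ⟨a, ha⟩ ⟨b, hb⟩ hab
    simpa using this
  refine ⟨e, hsurj, ?_⟩
  intro k j hk hj
  induction k with
  | zero => simp
  | succ n ih =>
    have ih := ih (by omega)
    by_cases hnj : n = j
    · subst hnj
      have h3 := he1 n
      simp at ih
      rw [ih] at h3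
      simp
      rcases hD.vertex 0 (e n) with h | h <;>
      rcases hD.vertex (n+1) (e n) with h' | h' <;> rw [h, h'] at h3 ⊢ <;> first | exact absurd rfl h3 | norm_num
    · rw [← he2 n (e j) (fun h => hnj (hinj _ _ (by omega) hj h.symm)), ih]
      have : n ≤ j ↔ n + 1 ≤ j := by omega
      simp only [this]

open Classical in
/-- Indicator of membership of `D k` in `Q`. -/
def cInd (t : ℕ) (D : ℕ → Vec t) (Q : Finset (Vec t)) (k : ℕ) : ℝ :=
  if D k ∈ Q then 1 else 0

theorem aux_pm (t : ℕ) (T : Vec t) (Q : Finset (Vec t)) :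
    Decomp01 t T Q ↔ ∀ i, ∑ q ∈ Q, (2 * q i - 1) = 2 * T i - 1 := by
  unfold Decomp01
  rw [funext_iff]
  refine forall_congr' fun i => ?_
  rw [Finset.sum_filter_ne_zero, Finset.sum_sub_distrib, ← Finset.mul_sum]
  simp only [Pi.add_apply, Pi.smul_apply, Finset.sum_apply, smul_eq_mul, Finset.sum_const,
    nsmul_eq_mul]
  constructor <;> intro h <;> linarith

theorem aux_sum (t : ℕ) (ht : 3 ≤ t) (D : ℕ → Vec t) (hD : IsSymCycle01 t D)
    (Q : Finset (Vec t)) (hQ : Q ⊆ VD t D) (i : Fin t) :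
    ∑ q ∈ Q, (2 * q i - 1) =
      ∑ k ∈ Finset.range t, (cInd t D Q k - cInd t D Q (k + t)) * (2 * D k i - 1) := by
  classical
  have h1 : ∑ q ∈ Q, (2 * q i - 1) = ∑ q ∈ VD t D, if q ∈ Q then (2 * q i - 1) else 0 := by
    rw [← Finset.sum_filter]
    congr 1
    ext q
    simp only [Finset.mem_filter]
    exact ⟨fun h => ⟨hQ h, h⟩, fun h => h.2⟩
  rw [h1]
  unfold VD
  rw [Finset.sum_image (by
    intro a ha b hb hab
    simp at ha hb
    exact hD.inj a b ha hb hab), two_mul t, Finset.sum_range_add, ← Finset.sum_add_distrib]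
  refine Finset.sum_congr rfl fun k hk => ?_
  have hk := Finset.mem_range.mp hk
  have h2 : D (t + k) i = 1 - D k i := by
    rw [add_comm, hD.symm k (by omega)]; rfl
  rw [h2]
  unfold cInd
  rw [add_comm k t]
  split_ifs <;> ring

/-- The decomposition equation pins the differences of the indicators. -/
theorem aux_char (t : ℕ) (ht : 3 ≤ t) (D : ℕ → Vec t) (hD : IsSymCycle01 t D)
    (T : Vec t) (hT : Is01Vertex T) :
    ∃ x : ℕ → ℝ, (∀ j < t, x j = -1 ∨ x j = 0 ∨ x j = 1) ∧
      ∀ Q ⊆ VD t D, (Decomp01 t T Q ↔ 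
        ∀ j < t, cInd t D Q j - cInd t D Q (j + t) = x j) := by
  obtain ⟨e, hs, he⟩ := aux_flip t ht D hD
  set g : ℕ → ℝ := fun j => (2 * T (e j) - 1) * (2 * D 0 (e j) - 1) with hg
  have hpm : ∀ j, g j = 1 ∨ g j = -1 := by
    intro j
    simp only [hg]
    rcases hT (e j) with h | h <;> rcases hD.vertex 0 (e j) with h' | h' <;> rw [h, h'] <;> norm_num
  refine ⟨fun j => (g j - (if j = 0 then -g (t-1) else g (j-1))) / 2, ?_, ?_⟩
  · intro j _
    have a := hpm j
    have b := hpm (t-1)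
    have c := hpm (j-1)
    dsimp only
    split_ifs
    · rcases a with a | a <;> rcases b with b | b <;> rw [a, b] <;> norm_num
    · rcases a with a | a <;> rcases c with b | b <;> rw [a, b] <;> norm_num
  · intro Q hQ
    rw [aux_pm, ← aux_sys t (by omega)]
    simp_rw [aux_sum t ht D hD Q hQ]
    have hsq : ∀ j, (2 * D 0 (e j) - 1) * (2 * D 0 (e j) - 1) = 1 := by
      intro j
      rcases hD.vertex 0 (e j) with h' | h' <;> rw [h'] <;> norm_num
    have hc : ∀ j < t, ∑ k ∈ Finset.range t,
        (cInd t D Q k - cInd t D Q (k + t)) * (if k ≤ j then (1:ℝ) else -1) =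
        (∑ k ∈ Finset.range t,
        (cInd t D Q k - cInd t D Q (k + t)) * (2 * D k (e j) - 1)) * (2 * D 0 (e j) - 1) := by
      intro j hj
      rw [Finset.sum_mul]
      refine Finset.sum_congr rfl fun k hk => ?_
      rw [he k j (Finset.mem_range.mp hk) hj]
      split_ifs
      · rw [mul_assoc, hsq]
      · linear_combination (cInd t D Q k - cInd t D Q (k + t)) * hsq j
    constructor
    · intro h j hj
      rw [hc j hj, h]
    · intro h i
      obtain ⟨j, hj, rfl⟩ := hs i
      have := h j hj
      rw [hc j hj] at this
      have hne : (2 * D 0 (e j) - 1) ≠ 0 := fun h0 => by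
        have := hsq j; rw [h0] at this; norm_num at this
      exact mul_right_cancel₀ hne this

/-- for a symmetric cycle in the hypercube graph on `{0,1}^t`, every vertex
`T̃` admits a unique inclusion-minimal subset `Q̃ ⊆ V(D̃)`, of odd cardinality, with
`T̃ = -(|Q̃|-1)/2 ⬝ (1,…,1) + ∑_{Q ∈ Q̃, Q ≠ 0} Q`. -/
theorem stmt9 (t : ℕ) (ht : 3 ≤ t) (D : ℕ → Vec t) (hD : IsSymCycle01 t D)
    (T : Vec t) (hT : Is01Vertex T) :
    ∃ Q : Finset (Vec t),
      (Q ⊆ VD t D ∧ Decomp01 t T Q ∧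
        ∀ Q' : Finset (Vec t), Q' ⊆ VD t D → Decomp01 t T Q' → ¬Q' ⊂ Q) ∧
      Odd Q.card ∧
      ∀ Q' : Finset (Vec t),
        (Q' ⊆ VD t D ∧ Decomp01 t T Q' ∧
          ∀ Q'' : Finset (Vec t), Q'' ⊆ VD t D → Decomp01 t T Q'' → ¬Q'' ⊂ Q') →
        Q' = Q := by
  classical
  obtain ⟨x, hx, hchar⟩ := aux_char t ht D hD T hT
  set K : Finset ℕ := (Finset.range (2*t)).filter
    (fun k => (k < t ∧ x k = 1) ∨ (t ≤ k ∧ x (k - t) = -1)) with hK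
  have hmem : ∀ k < 2 * t, (D k ∈ K.image D ↔
      ((k < t ∧ x k = 1) ∨ (t ≤ k ∧ x (k - t) = -1))) := by
    intro k hk
    rw [Finset.mem_image]
    constructor
    · rintro ⟨l, hl, hlk⟩
      rw [hK, Finset.mem_filter, Finset.mem_range] at hl
      have := hD.inj l k hl.1 hk hlk
      subst this
      exact hl.2
    · intro h
      exact ⟨k, by rw [hK, Finset.mem_filter, Finset.mem_range]; exact ⟨hk, h⟩, rfl⟩
  have hsub : K.image D ⊆ VD t D := by
    unfold VD
    exact Finset.image_subset_image (Finset.filter_subset _ _)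
  have hdec : Decomp01 t T (K.image D) := by
    rw [hchar _ hsub]
    intro j hj
    unfold cInd
    have a : (D j ∈ K.image D) ↔ x j = 1 := by
      rw [hmem j (by omega)]
      constructor
      · rintro (h | h)
        · exact h.2
        · omega
      · intro h; exact Or.inl ⟨hj, h⟩
    have b : (D (j+t) ∈ K.image D) ↔ x j = -1 := by
      rw [hmem (j+t) (by omega)]
      simp
    simp only [a, b]
    rcases hx j hj with h | h | h <;> rw [h] <;> norm_num
  have hleast : ∀ Q' : Finset (Vec t), Q' ⊆ VD t D → Decomp01 t T Q' → K.image D ⊆ Q' := by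
    intro Q' hQ' hd q hq
    rw [hchar _ hQ'] at hd
    obtain ⟨k, hk, rfl⟩ := Finset.mem_image.mp hq
    rw [hK, Finset.mem_filter, Finset.mem_range] at hk
    by_contra hc
    rcases hk.2 with h | h
    · have := hd k h.1
      unfold cInd at this
      rw [h.2, if_neg hc] at this
      split_ifs at this <;> norm_num at this
    · have := hd (k - t) (by omega)
      unfold cInd at this
      rw [h.2, Nat.sub_add_cancel h.1, if_neg hc] at this
      split_ifs at this <;> norm_num at this
  refine ⟨K.image D, ⟨hsub, hdec, fun Q' h1 h2 h3 => h3.2 (hleast Q' h1 h2)⟩, ?_, ?_⟩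
  · have h0 := (aux_pm t T _).mp hdec ⟨0, by omega⟩
    have hint : ∀ q ∈ K.image D, ∃ n : ℤ, q ⟨0, by omega⟩ = n := by
      intro q hq
      obtain ⟨k, _, rfl⟩ := Finset.mem_image.mp hq
      rcases hD.vertex k ⟨0, by omega⟩ with h | h
      · exact ⟨0, by simpa using h⟩
      · exact ⟨1, by simpa using h⟩
    have hS : ∃ n : ℤ, ∑ q ∈ K.image D, q ⟨0, by omega⟩ = n := by
      choose! f hf using hint
      exact ⟨∑ q ∈ K.image D, f q, by push_cast; exact Finset.sum_congr rfl hf⟩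
    obtain ⟨n, hn⟩ := hS
    have hTi : ∃ m : ℤ, T ⟨0, by omega⟩ = m := by
      rcases hT ⟨0, by omega⟩ with h | h
      · exact ⟨0, by simpa using h⟩
      · exact ⟨1, by simpa using h⟩
    obtain ⟨m, hm⟩ := hTi
    rw [Finset.sum_sub_distrib, ← Finset.mul_sum, hn, hm] at h0
    simp only [Finset.sum_const, nsmul_eq_mul, mul_one] at h0
    have h1 : 2 * n - ((K.image D).card : ℤ) = 2 * m - 1 := by exact_mod_cast h0
    rw [Nat.odd_iff]
    omega
  · rintro Q' ⟨h1, h2, h3⟩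
    by_contra hne
    exact h3 _ hsub hdec ((hleast Q' h1 h2).ssubset_of_ne (Ne.symm hne))
end
end
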